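/- arXiv:2511.12548 — 2 statements merged into one kernel-verified Lean document; each statement's English description precedes it below -/
import Mathlib

section
/- Let f : ℝⁿ → ℝ be differentiable with ∇f Lipschitz with constant L > 0 and bounded below by f⋆. Let η > 0 and 0 < α ≤ η² / (L(L + η)). Suppose (θ_t)_{t≥0} satisfies θ_{t+1} = θ_t − α (B_t + ηI)⁻¹ ∇f(θ_t), where each B_t is a symmetric matrix with 0 ⪯ B_t ⪯ L·I. Then for every T ≥ 1, (1/T) Σ_{t=0}^{T−1} ‖∇f(θ_t)‖² ≤ 2(L + η)(f(θ₀) − f⋆) / (α T). -/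
/-!
Write `g = ∇f(θ_t)`, `A = B_t + η I` and `v = A⁻¹ g`, so that `θ_{t+1} = θ_t - α v` and
`η I ⪯ A ⪯ (L + η) I`. The descent inequality for functions with `L`-Lipschitz gradient
(`le_add_inner_gradient_add_norm_sq`) gives
`f(θ_{t+1}) ≤ f(θ_t) - α ⟪g, v⟫ + (L α² / 2) ‖v‖²`.
Cocoercivity of `A` (`norm_sq_apply_le_mul_inner`) gives `‖g‖² ≤ (L + η) ⟪g, v⟫`, and the lower
bound on `A` gives `η ‖v‖ ≤ ‖g‖`. The step-size condition makes the quadratic term at most half of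
the linear one, whence `α / (2 (L + η)) ‖g‖² ≤ f(θ_t) - f(θ_{t+1})`
(`cao_step_decrease`); the sum over `t < T` telescopes.
-/

/-- The descent inequality: the difference of the two sides, restricted to the segment from `x` to
`x + d`, vanishes at `x` and has nonnegative derivative. -/
lemma le_add_inner_gradient_add_norm_sq
    {E : Type*} [NormedAddCommGroup E] [InnerProductSpace ℝ E] [CompleteSpace E]
    {f : E → ℝ} {L : ℝ} (hdiff : Differentiable ℝ f)
    (hlip : ∀ x y, ‖gradient f x - gradient f y‖ ≤ L * ‖x - y‖) (x d : E) :
    f (x + d) ≤ f x + inner ℝ (gradient f x) d + L / 2 * ‖d‖ ^ 2 := by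
  have hder : ∀ s : ℝ, HasDerivAt
      (fun s : ℝ => s * inner ℝ (gradient f x) d + L / 2 * s ^ 2 * ‖d‖ ^ 2 - f (x + s • d))
      (inner ℝ (gradient f x) d + L * s * ‖d‖ ^ 2 - inner ℝ (gradient f (x + s • d)) d) s := by
    intro s
    have hline : HasDerivAt (fun s : ℝ => x + s • d) d s := by
      simpa using ((hasDerivAt_id s).smul_const d).const_add x
    have hf : HasDerivAt (fun s : ℝ => f (x + s • d)) (inner ℝ (gradient f (x + s • d)) d) s :=
      ((hdiff (x + s • d)).hasFDerivAt.comp_hasDerivAt s hline).congr_deriv (by simp)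
    have h1 := ((hasDerivAt_id s).mul_const (inner ℝ (gradient f x) d))
    have h2 := ((((hasDerivAt_id s).pow 2).const_mul (L / 2)).mul_const (‖d‖ ^ 2))
    refine ((h1.add h2).sub hf).congr_deriv ?_
    simp only [id]
    push_cast
    ring
  have hmono := monotoneOn_of_deriv_nonneg (convex_Icc (0 : ℝ) 1)
    (fun s _ => (hder s).continuousAt.continuousWithinAt)
    (fun s _ => (hder s).differentiableAt.differentiableWithinAt) (by
      intro s hs
      rw [interior_Icc] at hs
      rw [(hder s).deriv]
      have h1 := real_inner_le_norm (gradient f (x + s • d) - gradient f x) d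
      have h2 := hlip (x + s • d) x
      rw [add_sub_cancel_left, norm_smul, Real.norm_of_nonneg hs.1.le] at h2
      rw [inner_sub_left] at h1
      have h3 := mul_le_mul_of_nonneg_right h2 (norm_nonneg d)
      linarith)
  have h := hmono (Set.left_mem_Icc.2 zero_le_one) (Set.right_mem_Icc.2 zero_le_one) zero_le_one
  simp only [zero_mul, zero_smul, one_mul, one_smul, add_zero, one_pow, mul_one, ne_eq,
    OfNat.ofNat_ne_zero, not_false_eq_true, zero_pow, mul_zero] at h
  linarith

/-- Cocoercivity of a symmetric operator with `0 ⪯ A ⪯ M`: test `0 ⪯ A` on `M v - A v` and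
`A ⪯ M` on `A v`. -/
lemma norm_sq_apply_le_mul_inner {E : Type*} [NormedAddCommGroup E] [InnerProductSpace ℝ E]
    {A : E →L[ℝ] E} {M : ℝ} (hM : 0 < M) (hsymm : ∀ x y, inner ℝ (A x) y = inner ℝ x (A y))
    (hnonneg : ∀ x, 0 ≤ inner ℝ x (A x)) (hle : ∀ x, inner ℝ x (A x) ≤ M * ‖x‖ ^ 2) (v : E) :
    ‖A v‖ ^ 2 ≤ M * inner ℝ (A v) v := by
  have h1 := hnonneg (M • v - A v)
  have h2 := hle (A v)
  have h3 := hsymm v (A v)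
  simp only [map_sub, map_smul, inner_sub_left, inner_sub_right, real_inner_smul_left,
    real_inner_smul_right] at h1
  rw [← h3, real_inner_self_eq_norm_sq, real_inner_comm] at h1
  nlinarith

lemma posSemidef_inner_toEuclideanCLM_nonneg {n : ℕ} {S : Matrix (Fin n) (Fin n) ℝ}
    (hS : S.PosSemidef) (x : EuclideanSpace ℝ (Fin n)) :
    0 ≤ inner ℝ x (Matrix.toEuclideanCLM (𝕜 := ℝ) S x) := by
  rw [Matrix.inner_toEuclideanCLM]
  simpa using hS.dotProduct_mulVec_nonneg x.ofLp

/-- The two spectral estimates for the preconditioned direction `v = (B + η I)⁻¹ g`. -/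
lemma damped_inverse_bounds {n : ℕ} {L η : ℝ} (hL : 0 < L) (hη : 0 < η)
    {B : Matrix (Fin n) (Fin n) ℝ} (hB : B.PosSemidef)
    (hBL : (L • (1 : Matrix (Fin n) (Fin n) ℝ) - B).PosSemidef)
    {g v : EuclideanSpace ℝ (Fin n)}
    (hv : v = Matrix.toEuclideanCLM (𝕜 := ℝ)
      ((B + η • (1 : Matrix (Fin n) (Fin n) ℝ))⁻¹) g) :
    ‖g‖ ^ 2 ≤ (L + η) * inner ℝ g v ∧ η * ‖v‖ ≤ ‖g‖ := by
  set C : Matrix (Fin n) (Fin n) ℝ := B + η • 1 with hC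
  set A := Matrix.toEuclideanCLM (𝕜 := ℝ) C with hA
  have hCpd : C.PosDef := (Matrix.PosDef.one.smul hη).posSemidef_add hB
  have hAv : A v = g := by
    have hdet : IsUnit C.det := (Matrix.isUnit_iff_isUnit_det C).1 hCpd.isUnit
    rw [hv, hA, ← mul_apply_eq_comp, ← map_mul, Matrix.mul_nonsing_inv _ hdet]
    simp
  have hAx : ∀ x, inner ℝ x (A x) =
      inner ℝ x (Matrix.toEuclideanCLM (𝕜 := ℝ) B x) + η * ‖x‖ ^ 2 := by
    intro x
    simp [hA, hC, inner_add_right, real_inner_smul_right]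
  have hlow : ∀ x, η * ‖x‖ ^ 2 ≤ inner ℝ x (A x) := by
    intro x
    rw [hAx]
    linarith [posSemidef_inner_toEuclideanCLM_nonneg hB x]
  have hup : ∀ x, inner ℝ x (A x) ≤ (L + η) * ‖x‖ ^ 2 := by
    intro x
    have h := posSemidef_inner_toEuclideanCLM_nonneg hBL x
    simp only [map_sub, map_smul, map_one, sub_apply,
      smul_apply, one_apply_eq_self, inner_sub_right,
      real_inner_smul_right, real_inner_self_eq_norm_sq] at h
    rw [hAx]
    linarith
  have hsymm : ∀ x y, inner ℝ (A x) y = inner ℝ x (A y) :=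
    Matrix.isSymmetric_toEuclideanLin_iff.2 hCpd.isHermitian
  constructor
  · have h := norm_sq_apply_le_mul_inner (add_pos hL hη) hsymm
      (fun x => le_trans (by positivity) (hlow x)) hup v
    rwa [hAv] at h
  · have h1 := hlow v
    rw [hAv] at h1
    have h2 := real_inner_le_norm v g
    rcases (norm_nonneg v).eq_or_lt with h0 | h0
    · rw [← h0, mul_zero]
      exact norm_nonneg g
    · refine le_of_mul_le_mul_left ?_ h0
      nlinarith

lemma cao_step_decrease {n : ℕ} {f : EuclideanSpace ℝ (Fin n) → ℝ} {L η α : ℝ} (hL : 0 < L)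
    (hdiff : Differentiable ℝ f)
    (hlip : ∀ x y, ‖gradient f x - gradient f y‖ ≤ L * ‖x - y‖)
    (hη : 0 < η) (hα : 0 < α) (hαle : α ≤ η ^ 2 / (L * (L + η)))
    {B : Matrix (Fin n) (Fin n) ℝ} (hB : B.PosSemidef)
    (hBL : (L • (1 : Matrix (Fin n) (Fin n) ℝ) - B).PosSemidef)
    (x : EuclideanSpace ℝ (Fin n)) :
    α * ‖gradient f x‖ ^ 2 ≤ 2 * (L + η) * (f x - f (x - α • Matrix.toEuclideanCLM (𝕜 := ℝ)
      ((B + η • (1 : Matrix (Fin n) (Fin n) ℝ))⁻¹) (gradient f x))) := by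
  obtain ⟨v, hv⟩ : ∃ v, v = Matrix.toEuclideanCLM (𝕜 := ℝ)
    ((B + η • (1 : Matrix (Fin n) (Fin n) ℝ))⁻¹) (gradient f x) := ⟨_, rfl⟩
  obtain ⟨h1, h2⟩ := damped_inverse_bounds hL hη hB hBL hv
  rw [← hv]
  have hd := le_add_inner_gradient_add_norm_sq hdiff hlip x (-(α • v))
  rw [← sub_eq_add_neg, inner_neg_right, real_inner_smul_right, norm_neg, norm_smul,
    Real.norm_of_nonneg hα.le] at hd
  rw [le_div_iff₀ (by positivity)] at hαle
  have h3 : (η * ‖v‖) ^ 2 ≤ ‖gradient f x‖ ^ 2 := pow_le_pow_left₀ (by positivity) h2 2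
  -- the step-size condition, multiplied by `α ‖v‖²`, bounds the quadratic term of the descent
  have h4 : (L + η) * (L * (α * ‖v‖) ^ 2) ≤ α * ‖gradient f x‖ ^ 2 := by
    have h5 := mul_le_mul_of_nonneg_right hαle (by positivity : 0 ≤ α * ‖v‖ ^ 2)
    have h6 := mul_le_mul_of_nonneg_left h3 hα.le
    linarith
  have h7 := mul_le_mul_of_nonneg_left h1 hα.le
  have h8 := mul_le_mul_of_nonneg_left hd (by positivity : 0 ≤ 2 * (L + η))
  linarith

/-- **Proposition 1 (Non-convex stationarity, deterministic full-gradient form).**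
Let `f` have `L`-Lipschitz gradient (`L > 0`) and be bounded below by `f⋆`, let `η > 0` and
`0 < α ≤ η²/(L(L+η))`, and let the CAO iterates satisfy
`θ_{t+1} = θ_t − α (B_t + η I)⁻¹ ∇f(θ_t)` with symmetric sketches `0 ⪯ B_t ⪯ L·I`.
Then for every `T ≥ 1`,
`(1/T) Σ_{t<T} ‖∇f(θ_t)‖² ≤ 2(L+η)(f(θ₀) − f⋆)/(α T)`. -/
theorem cao_nonconvex_stationarity
    (n : ℕ) (f : EuclideanSpace ℝ (Fin n) → ℝ) (L : ℝ) (hL : 0 < L)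
    (hdiff : Differentiable ℝ f)
    (hlip : ∀ x y, ‖gradient f x - gradient f y‖ ≤ L * ‖x - y‖)
    (fstar : ℝ) (hbdd : ∀ θ', fstar ≤ f θ')
    (η : ℝ) (hη : 0 < η)
    (α : ℝ) (hα : 0 < α) (hαle : α ≤ η ^ 2 / (L * (L + η)))
    (B : ℕ → Matrix (Fin n) (Fin n) ℝ)
    (hBpsd : ∀ t, (B t).PosSemidef)
    (hBL : ∀ t, (L • (1 : Matrix (Fin n) (Fin n) ℝ) - B t).PosSemidef)
    (θ : ℕ → EuclideanSpace ℝ (Fin n))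
    (hupd : ∀ t, θ (t + 1) = θ t - α • Matrix.toEuclideanCLM (𝕜 := ℝ)
        ((B t + η • (1 : Matrix (Fin n) (Fin n) ℝ))⁻¹) (gradient f (θ t)))
    (T : ℕ) (hT : 1 ≤ T) :
    (1 / (T : ℝ)) * ∑ t ∈ Finset.range T, ‖gradient f (θ t)‖ ^ 2 ≤
      2 * (L + η) * (f (θ 0) - fstar) / (α * T) := by
  have hT0 : (0 : ℝ) < T := by exact_mod_cast hT
  have hsum : α * ∑ t ∈ Finset.range T, ‖gradient f (θ t)‖ ^ 2 ≤
      2 * (L + η) * (f (θ 0) - f (θ T)) := by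
    rw [← Finset.sum_range_sub' (fun t => f (θ t)), Finset.mul_sum, Finset.mul_sum]
    refine Finset.sum_le_sum fun t _ => ?_
    rw [hupd t]
    exact cao_step_decrease hL hdiff hlip hη hα hαle (hBpsd t) (hBL t) (θ t)
  have hlast : 2 * (L + η) * (f (θ 0) - f (θ T)) ≤ 2 * (L + η) * (f (θ 0) - fstar) :=
    mul_le_mul_of_nonneg_left (by linarith [hbdd (θ T)]) (by positivity)
  rw [le_div_iff₀ (by positivity)]
  calc _ = α * ∑ t ∈ Finset.range T, ‖gradient f (θ t)‖ ^ 2 := by field_simp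
    _ ≤ _ := hsum.trans hlast
end

section
/- Let f : ℝⁿ → ℝ be differentiable with ∇f Lipschitz with constant L > 0, bounded below by f⋆, and satisfying the PL inequality (1/2)‖∇f(θ)‖² ≥ μ (f(θ) − f⋆) for all θ, with μ > 0. Let M be a symmetric positive definite matrix and 0 < α ≤ λ_min(M) / (L ‖M‖²). Then the update θ⁺ = θ − α M ∇f(θ) satisfies f(θ⁺) − f⋆ ≤ (1 − α μ λ_min(M)) (f(θ) − f⋆). -/
/-!
The descent lemma for an `L`-smooth function, applied along the step `v = -α M g` with
`g = ∇f(θ)`, gives `f(θ⁺) ≤ f(θ) - α ⟪g, M g⟫ + (L / 2) α² ‖M g‖²`. The Rayleigh bound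
`⟪g, M g⟫ ≥ λ_min(M) ‖g‖²`, the operator norm bound `‖M g‖ ≤ ‖M‖ ‖g‖` and the step-size
restriction `α L ‖M‖² ≤ λ_min(M)` turn this into `f(θ⁺) ≤ f(θ) - (α λ_min(M) / 2) ‖g‖²`, and the PL
inequality bounds `‖g‖² / 2` below by `μ (f(θ) - f⋆)`.
-/

/-- The descent lemma: an `L`-Lipschitz gradient gives a quadratic upper bound. -/
lemma descent_lemma {E : Type*} [NormedAddCommGroup E] [InnerProductSpace ℝ E] [CompleteSpace E]
    (f : E → ℝ) (L : ℝ) (hdiff : Differentiable ℝ f)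
    (hlip : ∀ x y, ‖gradient f x - gradient f y‖ ≤ L * ‖x - y‖) (x v : E) :
    f (x + v) ≤ f x + inner ℝ (gradient f x) v + L / 2 * ‖v‖ ^ 2 := by
  -- The gap `φ` between `f` and its quadratic model along the segment has nonpositive derivative.
  let φ : ℝ → ℝ := fun t =>
    f (x + t • v) - t * inner ℝ (gradient f x) v - t ^ 2 * (L / 2 * ‖v‖ ^ 2)
  have hφ : ∀ t, HasDerivAt φ (inner ℝ (gradient f (x + t • v)) v
      - inner ℝ (gradient f x) v - 2 * t * (L / 2 * ‖v‖ ^ 2)) t := by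
    intro t
    have hline : HasDerivAt (fun t : ℝ => x + t • v) v t := by
      simpa using ((hasDerivAt_id t).smul_const v).const_add x
    have hf : HasDerivAt (fun t : ℝ => f (x + t • v))
        (inner ℝ (gradient f (x + t • v)) v) t := by
      exact (hdiff (x + t • v)).hasGradientAt.hasFDerivAt.comp_hasDerivAt t hline
    have hlin : HasDerivAt (fun t : ℝ => t * inner ℝ (gradient f x) v)
        (inner ℝ (gradient f x) v) t := by
      simpa using (hasDerivAt_id t).mul_const (inner ℝ (gradient f x) v)
    have hsq : HasDerivAt (fun t : ℝ => t ^ 2 * (L / 2 * ‖v‖ ^ 2))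
        (2 * t * (L / 2 * ‖v‖ ^ 2)) t := by
      simpa using (hasDerivAt_pow 2 t).mul_const (L / 2 * ‖v‖ ^ 2)
    exact (hf.sub hlin).sub hsq
  have hanti : AntitoneOn φ (Set.Icc 0 1) := by
    refine antitoneOn_of_deriv_nonpos (convex_Icc 0 1)
      (fun t _ => (hφ t).continuousAt.continuousWithinAt)
      (fun t _ => (hφ t).differentiableAt.differentiableWithinAt) ?_
    intro t ht
    rw [interior_Icc] at ht
    rw [(hφ t).deriv, ← inner_sub_left]
    have h1 := real_inner_le_norm (gradient f (x + t • v) - gradient f x) v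
    have h2 := hlip (x + t • v) x
    rw [add_sub_cancel_left, norm_smul, Real.norm_of_nonneg ht.1.le] at h2
    have h3 := mul_le_mul_of_nonneg_right h2 (norm_nonneg v)
    linarith
  have h := hanti (by simp) (by simp) (zero_le_one' ℝ)
  simp only [φ, one_smul, zero_smul, add_zero] at h
  linarith

/-- The Rayleigh bound, obtained by expanding `x` in an orthonormal eigenbasis of `M`. -/
lemma iInf_eigenvalues_mul_norm_sq_le {n : ℕ} (M : Matrix (Fin n) (Fin n) ℝ) (hM : M.IsHermitian)
    (x : EuclideanSpace ℝ (Fin n)) :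
    (⨅ i, hM.eigenvalues i) * ‖x‖ ^ 2 ≤ inner ℝ x (Matrix.toEuclideanCLM (𝕜 := ℝ) M x) := by
  set b := hM.eigenvectorBasis
  set T := Matrix.toEuclideanCLM (n := Fin n) (𝕜 := ℝ) M with hT
  have hb : ∀ i, T (b i) = hM.eigenvalues i • b i := by
    intro i
    have h := hM.mulVec_eigenvectorBasis i
    ext j
    simpa [hT, b] using congrFun h j
  have hsymm : ∀ y z, inner ℝ (T y) z = inner ℝ y (T z) :=
    Matrix.isSymmetric_toEuclideanLin_iff.mpr hM
  have hcoef : ∀ i, inner ℝ (b i) (T x) = hM.eigenvalues i * inner ℝ (b i) x := by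
    intro i
    rw [← hsymm, hb, real_inner_smul_left]
  rw [← b.sum_inner_mul_inner x (T x), ← b.sum_sq_norm_inner_right x, Finset.mul_sum]
  refine Finset.sum_le_sum fun i _ => ?_
  rw [hcoef, real_inner_comm, Real.norm_eq_abs, sq_abs]
  have h := mul_le_mul_of_nonneg_right
    (ciInf_le (Set.finite_range hM.eigenvalues).bddBelow i) (sq_nonneg (inner ℝ x (b i)))
  linarith

/-- **One-step PL contraction (underlying Theorem 1).**
Let `f` have `L`-Lipschitz gradient (`L > 0`), be bounded below by `f⋆`, and satisfy the PL
inequality `(1/2)‖∇f(θ)‖² ≥ μ (f(θ) − f⋆)` with `μ > 0`.  Let `M` be symmetric positive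
definite and `0 < α ≤ λ_min(M)/(L ‖M‖²)`.  Then `θ⁺ = θ − α M ∇f(θ)` satisfies
`f(θ⁺) − f⋆ ≤ (1 − α μ λ_min(M)) (f(θ) − f⋆)`. -/
theorem pl_one_step_contraction
    (n : ℕ) (f : EuclideanSpace ℝ (Fin n) → ℝ) (L : ℝ) (hL : 0 < L)
    (hdiff : Differentiable ℝ f)
    (hlip : ∀ x y, ‖gradient f x - gradient f y‖ ≤ L * ‖x - y‖)
    (fstar : ℝ) (hbdd : ∀ θ', fstar ≤ f θ')
    (μ : ℝ) (hμ : 0 < μ)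
    (hPL : ∀ θ', (1 / 2) * ‖gradient f θ'‖ ^ 2 ≥ μ * (f θ' - fstar))
    (M : Matrix (Fin n) (Fin n) ℝ) (hM : M.PosDef)
    (α : ℝ) (hα : 0 < α)
    (hαle : α ≤ (⨅ i, hM.isHermitian.eigenvalues i) /
        (L * ‖Matrix.toEuclideanCLM (𝕜 := ℝ) M‖ ^ 2))
    (θ : EuclideanSpace ℝ (Fin n)) :
    f (θ - α • Matrix.toEuclideanCLM (𝕜 := ℝ) M (gradient f θ)) - fstar ≤
      (1 - α * μ * (⨅ i, hM.isHermitian.eigenvalues i)) * (f θ - fstar) := by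
  set lam := ⨅ i, hM.isHermitian.eigenvalues i with hlam
  set T := Matrix.toEuclideanCLM (n := Fin n) (𝕜 := ℝ) M with hT
  set g := gradient f θ with hg
  -- If `‖T‖ = 0`, the bound on `α` reads `α ≤ lam / 0 = 0`; this also covers `n = 0`.
  have hTpos : 0 < ‖T‖ := by
    refine (norm_nonneg T).lt_of_ne fun h => ?_
    rw [← h] at hαle
    simp at hαle
    linarith
  have hstep : α * (L * ‖T‖ ^ 2) ≤ lam := (le_div_iff₀ (by positivity)).mp hαle
  have hlam_pos : 0 < lam := lt_of_lt_of_le (by positivity) hstep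
  have hdesc := descent_lemma f L hdiff hlip θ (-(α • T g))
  rw [← sub_eq_add_neg, inner_neg_right, real_inner_smul_right, norm_neg, norm_smul,
    Real.norm_of_nonneg hα.le, ← hg] at hdesc
  have hray : lam * ‖g‖ ^ 2 ≤ inner ℝ g (T g) :=
    iInf_eigenvalues_mul_norm_sq_le M hM.isHermitian g
  have hray' := mul_le_mul_of_nonneg_left hray hα.le
  have hop : ‖T g‖ ^ 2 ≤ (‖T‖ * ‖g‖) ^ 2 := by
    gcongr
    exact T.le_opNorm g
  have hquad : L / 2 * (α * ‖T g‖) ^ 2 ≤ α / 2 * (lam * ‖g‖ ^ 2) := calc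
    L / 2 * (α * ‖T g‖) ^ 2 = L / 2 * α ^ 2 * ‖T g‖ ^ 2 := by ring
    _ ≤ L / 2 * α ^ 2 * (‖T‖ * ‖g‖) ^ 2 := by gcongr
    _ = α / 2 * (α * (L * ‖T‖ ^ 2) * ‖g‖ ^ 2) := by ring
    _ ≤ α / 2 * (lam * ‖g‖ ^ 2) := by gcongr
  have hpl := mul_le_mul_of_nonneg_left (hPL θ) (mul_pos hα hlam_pos).le
  rw [← hg] at hpl
  linarith
end
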